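/- arXiv:2203.12133 — 2 statements merged into one kernel-verified Lean document; each statement's English description precedes it below -/
import Mathlib

section
/- Let F : ({0,...,T} × S × A → ℝ) → ℝ be twice continuously differentiable on an open convex set U containing 𝒳(P, z₀), with positive definite Hessian at every point of U, and let c_x(t,s,a) := ∂F/∂x(t,s,a)(x) denote its gradient. Then x̂ ∈ 𝒳(P, z₀) minimizes F over 𝒳(P, z₀) if and only if x̂ satisfies the Bellman condition for the costs c_{x̂}. -/
open Finset

/-- The feasible set 𝒳(P, z₀) of state-action distributions. -/
def Feas {S A : Type*} [Fintype S] [Fintype A] (T : ℕ)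
    (P : Fin (T+1) → S → S → A → ℝ) (z0 : S → ℝ) :
    Set (Fin (T+1) → S → A → ℝ) :=
  {x | (∀ t s a, 0 ≤ x t s a) ∧
    (∀ s, ∑ a, x 0 s a = z0 s) ∧
    ∀ (t : ℕ) (ht : t < T), ∀ s,
      ∑ s', ∑ a, P ⟨t+1, by omega⟩ s s' a * x ⟨t, by omega⟩ s' a
        = ∑ a, x ⟨t+1, by omega⟩ s a}

/-- `P` is a transition kernel: nonnegative, and column-stochastic for t ∈ {1,…,T}. -/
def IsKernel {S A : Type*} [Fintype S] (T : ℕ)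
    (P : Fin (T+1) → S → S → A → ℝ) : Prop :=
  (∀ t s' s a, 0 ≤ P t s' s a) ∧
    ∀ t : Fin (T+1), t ≠ 0 → ∀ s a, ∑ s', P t s' s a = 1

/-- Backwards recursion for Q-values: `Qaux T P c k` is the Q-value at time T - k. -/
noncomputable def Qaux {S A : Type*} [Fintype S] [Fintype A] [Nonempty A] (T : ℕ)
    (P : Fin (T+1) → S → S → A → ℝ) (c : Fin (T+1) → S → A → ℝ) : ℕ → S → A → ℝ
  | 0, s, a => c (Fin.last T) s a
  | k+1, s, a =>
    c ⟨T - (k+1), by omega⟩ s a +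
      ∑ s', P ⟨T - k, by omega⟩ s' s a *
        Finset.univ.inf' Finset.univ_nonempty (Qaux T P c k s')

/-- Q-values: `Q(T,s,a) = c(T,s,a)`,
`Q(t-1,s,a) = c(t-1,s,a) + ∑_{s'} P(t,s',s,a) · min_{a'} Q(t,s',a')`. -/
noncomputable def Qval {S A : Type*} [Fintype S] [Fintype A] [Nonempty A] (T : ℕ)
    (P : Fin (T+1) → S → S → A → ℝ) (c : Fin (T+1) → S → A → ℝ)
    (t : Fin (T+1)) : S → A → ℝ :=
  Qaux T P c (T - t.1)

/-- x satisfies the Bellman condition for costs c: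
every state-action pair played with positive probability achieves the minimal Q-value. -/
def BellmanCond {S A : Type*} [Fintype S] [Fintype A] [Nonempty A] (T : ℕ)
    (P : Fin (T+1) → S → S → A → ℝ) (c : Fin (T+1) → S → A → ℝ)
    (x : Fin (T+1) → S → A → ℝ) : Prop :=
  ∀ t s a, 0 < x t s a →
    Qval T P c t s a = Finset.univ.inf' Finset.univ_nonempty (Qval T P c t s)

/-- Standard basis vector of the space of state-action functions. -/
def eb {S A : Type*} [DecidableEq S] [DecidableEq A] (T : ℕ)
    (t : Fin (T+1)) (s : S) (a : A) : Fin (T+1) → S → A → ℝ :=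
  fun t' s' a' => if t' = t ∧ s' = s ∧ a' = a then 1 else 0

/-- Standard basis vector of the joint (N-player) space. -/
def ebN {S A : Type*} [DecidableEq S] [DecidableEq A] (N T : ℕ)
    (i : Fin N) (t : Fin (T+1)) (s : S) (a : A) :
    Fin N → Fin (T+1) → S → A → ℝ :=
  fun j => if j = i then eb T t s a else 0

section helpers

variable {S A : Type*} [Fintype S] [Fintype A] [Nonempty A] {T : ℕ}

/-- The value function. -/
noncomputable def Vv (T : ℕ) (P : Fin (T+1) → S → S → A → ℝ) (c : Fin (T+1) → S → A → ℝ)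
    (t : Fin (T+1)) (s : S) : ℝ :=
  Finset.univ.inf' Finset.univ_nonempty (Qval T P c t s)

lemma Qval_last (P : Fin (T+1) → S → S → A → ℝ) (c : Fin (T+1) → S → A → ℝ) (s : S) (a : A) :
    Qval T P c (Fin.last T) s a = c (Fin.last T) s a := by
  simp [Qval, Qaux]

lemma Qval_step (P : Fin (T+1) → S → S → A → ℝ) (c : Fin (T+1) → S → A → ℝ)
    (t : ℕ) (ht : t < T) (s : S) (a : A) :
    Qval T P c ⟨t, by omega⟩ s a = c ⟨t, by omega⟩ s a +
      ∑ s', P ⟨t+1, by omega⟩ s' s a * Vv T P c ⟨t+1, by omega⟩ s' := by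
  obtain ⟨k, rfl⟩ : ∃ k, T = t + (k + 1) := ⟨T - t - 1, by omega⟩
  have h1 : t + (k+1) - t = k + 1 := by omega
  have h2 : t + (k+1) - (t+1) = k := by omega
  have h3 : t + (k+1) - k = t + 1 := by omega
  have h4 : t + (k+1) - (k+1) = t := by omega
  simp only [Qval, Vv, h1, h2, Qaux, h3, h4]

lemma duality (P : Fin (T+1) → S → S → A → ℝ) (c : Fin (T+1) → S → A → ℝ) (z0 : S → ℝ)
    (x : Fin (T+1) → S → A → ℝ) (hx : x ∈ Feas T P z0) :
    ∑ t, ∑ s, ∑ a, x t s a * c t s a = ∑ s, z0 s * Vv T P c 0 s +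
      ∑ t, ∑ s, ∑ a, x t s a * (Qval T P c t s a - Vv T P c t s) := by
  obtain ⟨-, hx0, hx1⟩ := hx
  let B : ℕ → ℝ := fun t => if h : t < T + 1 then
    ∑ s, (∑ a, x ⟨t, h⟩ s a) * Vv T P c ⟨t, h⟩ s else 0
  have key : ∀ t : Fin (T+1), ∑ s, ∑ a, x t s a * c t s a =
      (B t - B (t+1)) + ∑ s, ∑ a, x t s a * (Qval T P c t s a - Vv T P c t s) := by
    rintro ⟨t, ht⟩
    have e1 : B t = ∑ s, ∑ a, x ⟨t, ht⟩ s a * Vv T P c ⟨t, ht⟩ s := by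
      simp only [B, dif_pos ht, Finset.sum_mul]
    have e2 : B (t+1) = ∑ s, ∑ a, x ⟨t, ht⟩ s a *
        (Qval T P c ⟨t, ht⟩ s a - c ⟨t, ht⟩ s a) := by
      by_cases h : t < T
      · simp only [B, dif_pos (Nat.succ_lt_succ h)]
        simp only [← hx1 t h, Qval_step P c t h, add_sub_cancel_left, Finset.sum_mul,
          Finset.mul_sum]
        rw [Finset.sum_comm]
        refine Finset.sum_congr rfl fun s _ => ?_
        rw [Finset.sum_comm]
        refine Finset.sum_congr rfl fun a _ => Finset.sum_congr rfl fun s' _ => ?_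
        ring
      · obtain rfl : t = T := by omega
        have := Qval_last P c
        simp only [Fin.last] at this
        simp [B, this]
    simp only
    rw [e1, e2]
    simp only [← Finset.sum_sub_distrib, ← Finset.sum_add_distrib]
    refine Finset.sum_congr rfl fun s _ => Finset.sum_congr rfl fun a _ => ?_
    ring
  rw [Finset.sum_congr rfl fun t _ => key t, Finset.sum_add_distrib]
  congr 1
  rw [Fin.sum_univ_eq_sum_range (fun t => B t - B (t+1)) (T+1), Finset.sum_range_sub']
  have : B 0 = ∑ s, (∑ a, x 0 s a) * Vv T P c 0 s := by
    simp only [B, dif_pos (Nat.succ_pos T)]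
    rfl
  rw [this]
  simp [B, hx0]

lemma exists_greedy [DecidableEq A] (P : Fin (T+1) → S → S → A → ℝ) (hP : IsKernel T P)
    (c : Fin (T+1) → S → A → ℝ) (z0 : S → ℝ) (hz0 : ∀ s, 0 ≤ z0 s) :
    ∃ y ∈ Feas T P z0, ∑ t, ∑ s, ∑ a, y t s a * c t s a = ∑ s, z0 s * Vv T P c 0 s := by
  have hg : ∀ t s, ∃ a, Qval T P c t s a = Vv T P c t s := fun t s => by
    obtain ⟨a, -, h⟩ := Finset.exists_mem_eq_inf' Finset.univ_nonempty (Qval T P c t s)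
    exact ⟨a, h.symm⟩
  choose g hg using hg
  let m : Fin (T+1) → S → ℝ := fun t => Fin.induction (motive := fun _ => S → ℝ) z0
    (fun i m s => ∑ s', P i.succ s s' (g i.castSucc s') * m s') t
  have m0 : m 0 = z0 := by simp [m]
  have ms : ∀ i : Fin T, m i.succ =
      fun s => ∑ s', P i.succ s s' (g i.castSucc s') * m i.castSucc s' := fun i => by
    simp only [m, Fin.induction_succ]
  have mn : ∀ t s, 0 ≤ m t s := by
    intro t
    induction t using Fin.induction with
    | zero => rw [m0]; exact hz0
    | succ i ih =>
      rw [ms]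
      exact fun s => Finset.sum_nonneg fun s' _ => mul_nonneg (hP.1 _ _ _ _) (ih _)
  have hy : (fun t s a => if a = g t s then m t s else 0) ∈ Feas T P z0 := by
    refine ⟨fun t s a => ?_, fun s => ?_, fun t ht s => ?_⟩
    · dsimp only
      split_ifs
      · exact mn _ _
      · exact le_rfl
    · simp [m0]
    · have := congrFun (ms ⟨t, ht⟩) s
      simp only [Fin.succ_mk, Fin.castSucc_mk] at this
      simp [this]
  refine ⟨_, hy, ?_⟩
  rw [duality P c z0 _ hy]
  simp [ite_mul, hg]

lemma feas_convex (P : Fin (T+1) → S → S → A → ℝ) (z0 : S → ℝ) : Convex ℝ (Feas T P z0) := by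
  rintro x ⟨hx, hx0, hx1⟩ y ⟨hy, hy0, hy1⟩ α β hα hβ hab
  refine ⟨fun t s a => ?_, fun s => ?_, fun t ht s => ?_⟩
  · have := hx t s a
    have := hy t s a
    simp only [Pi.add_apply, Pi.smul_apply, smul_eq_mul]
    positivity
  · simp only [Pi.add_apply, Pi.smul_apply, smul_eq_mul, Finset.sum_add_distrib,
      ← Finset.mul_sum, hx0, hy0]
    rw [← add_mul, hab, one_mul]
  · simp only [Pi.add_apply, Pi.smul_apply, smul_eq_mul, Finset.sum_add_distrib,
      ← Finset.mul_sum, ← hx1 t ht, ← hy1 t ht]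
    simp only [Finset.mul_sum, ← Finset.sum_add_distrib]
    refine Finset.sum_congr rfl fun s' _ => Finset.sum_congr rfl fun a _ => ?_
    ring

lemma lin_expand [DecidableEq S] [DecidableEq A] (L : (Fin (T+1) → S → A → ℝ) →L[ℝ] ℝ)
    (v : Fin (T+1) → S → A → ℝ) :
    L v = ∑ t, ∑ s, ∑ a, v t s a * L (eb T t s a) := by
  have : v = ∑ t, ∑ s, ∑ a, v t s a • eb T t s a := by
    funext t s a
    simp only [Finset.sum_apply, Pi.smul_apply, eb, smul_eq_mul]
    rw [Finset.sum_eq_single t, Finset.sum_eq_single s, Finset.sum_eq_single a]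
    · simp
    all_goals simp +contextual [eq_comm]
  conv_lhs => rw [this]
  simp only [map_sum, map_smul, smul_eq_mul]

lemma convex_grad {E : Type*} [NormedAddCommGroup E] [NormedSpace ℝ E] (F : E → ℝ) (U : Set E)
    (hU : IsOpen U) (hUc : Convex ℝ U) (hC2 : ContDiffOn ℝ 2 F U)
    (hh : ∀ x ∈ U, ∀ v : E, v ≠ 0 → 0 < fderiv ℝ (fderiv ℝ F) x v v)
    (x y : E) (hx : x ∈ U) (hy : y ∈ U) : F x + fderiv ℝ F x (y - x) ≤ F y := by
  have hl : ∀ τ : ℝ, HasDerivAt (fun τ : ℝ => x + τ • (y - x)) (y - x) τ := fun τ => by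
    simpa using ((hasDerivAt_id τ).smul_const (y - x)).const_add x
  have hmem : ∀ τ ∈ Set.Icc (0:ℝ) 1, x + τ • (y - x) ∈ U := fun τ hτ =>
    hUc.add_smul_sub_mem hx hy hτ
  have hd1 : ∀ τ ∈ Set.Icc (0:ℝ) 1, HasDerivAt (fun τ : ℝ => F (x + τ • (y - x)))
      (fderiv ℝ F (x + τ • (y - x)) (y - x)) τ := fun τ hτ => by
    have h := ((hC2.contDiffAt (hU.mem_nhds (hmem τ hτ))).differentiableAt
      (by norm_num)).hasFDerivAt
    exact h.comp_hasDerivAt τ (hl τ)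
  have hd2 : ∀ τ ∈ Set.Icc (0:ℝ) 1, HasDerivAt (fun τ : ℝ => fderiv ℝ F (x + τ • (y - x)) (y - x))
      (fderiv ℝ (fderiv ℝ F) (x + τ • (y - x)) (y - x) (y - x)) τ := fun τ hτ => by
    have h := (((hC2.contDiffAt (hU.mem_nhds (hmem τ hτ))).fderiv_right (m := 1)
      (by norm_num)).differentiableAt (by norm_num)).hasFDerivAt
    have h2 := h.comp_hasDerivAt τ (hl τ)
    exact h2.clm_apply (hasDerivAt_const τ (y - x)) |>.congr_deriv (by simp)
  have hmono : MonotoneOn (fun τ : ℝ => fderiv ℝ F (x + τ • (y - x)) (y - x))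
      (Set.Icc (0:ℝ) 1) := by
    refine monotoneOn_of_deriv_nonneg (convex_Icc 0 1)
      (fun τ hτ => (hd2 τ hτ).continuousAt.continuousWithinAt)
      (fun τ hτ => (hd2 τ (interior_subset hτ)).differentiableAt.differentiableWithinAt)
      (fun τ hτ => ?_)
    rw [(hd2 τ (interior_subset hτ)).deriv]
    by_cases hv : y - x = 0
    · simp [hv]
    · exact (hh _ (hmem τ (interior_subset hτ)) _ hv).le
  obtain ⟨ξ, hξ, he⟩ := exists_hasDerivAt_eq_slope (fun τ : ℝ => F (x + τ • (y - x))) _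
    (zero_lt_one' ℝ) (fun τ hτ => (hd1 τ hτ).continuousAt.continuousWithinAt)
    (fun τ hτ => hd1 τ (Set.Ioo_subset_Icc_self hτ))
  have := hmono (Set.left_mem_Icc.2 zero_le_one) (Set.Ioo_subset_Icc_self hξ) hξ.1.le
  simp only [zero_smul, add_zero, one_smul, add_sub_cancel, sub_zero, div_one] at this he
  linarith

end helpers

/-- For F twice continuously differentiable with positive definite Hessian on
an open convex set U ⊇ 𝒳(P,z₀): x̂ ∈ 𝒳(P,z₀) minimizes F over 𝒳(P,z₀) iff x̂ satisfies
the Bellman condition for the gradient costs c_x̂(t,s,a) = ∂F/∂x(t,s,a)(x̂). -/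
theorem stmt1 {S A : Type*} [Fintype S] [Fintype A] [Nonempty S] [Nonempty A]
    [DecidableEq S] [DecidableEq A] {T : ℕ}
    (P : Fin (T+1) → S → S → A → ℝ) (hP : IsKernel T P)
    (z0 : S → ℝ) (hz0 : ∀ s, 0 ≤ z0 s)
    (F : (Fin (T+1) → S → A → ℝ) → ℝ)
    (U : Set (Fin (T+1) → S → A → ℝ)) (hUopen : IsOpen U) (hUconv : Convex ℝ U)
    (hXU : Feas T P z0 ⊆ U)
    (hC2 : ContDiffOn ℝ 2 F U)
    (hhess : ∀ x ∈ U, ∀ v : Fin (T+1) → S → A → ℝ, v ≠ 0 →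
      0 < fderiv ℝ (fderiv ℝ F) x v v)
    (xhat : Fin (T+1) → S → A → ℝ) (hxhat : xhat ∈ Feas T P z0) :
    (∀ x ∈ Feas T P z0, F xhat ≤ F x) ↔
      BellmanCond T P (fun t s a => fderiv ℝ F xhat (eb T t s a)) xhat := by
  set L := fderiv ℝ F xhat with hL
  set c : Fin (T+1) → S → A → ℝ := fun t s a => L (eb T t s a) with hc
  have hLx : ∀ v, L v = ∑ t, ∑ s, ∑ a, v t s a * c t s a := lin_expand L
  have hgap : ∀ t s a, 0 ≤ Qval T P c t s a - Vv T P c t s := fun t s a =>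
    sub_nonneg.2 (Finset.inf'_le _ (Finset.mem_univ a))
  have hterm : ∀ x ∈ Feas T P z0, ∀ t s a,
      0 ≤ x t s a * (Qval T P c t s a - Vv T P c t s) := fun x hx t s a =>
    mul_nonneg (hx.1 t s a) (hgap t s a)
  constructor
  · intro hmin
    obtain ⟨y, hy, hyL⟩ := exists_greedy P hP c z0 hz0
    have hdiff : HasFDerivAt F L xhat :=
      ((hC2.contDiffAt (hUopen.mem_nhds (hXU hxhat))).differentiableAt (by norm_num)).hasFDerivAt
    have hloc : IsLocalMinOn F (Feas T P z0) xhat :=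
      IsMinOn.localize (fun x hx => hmin x hx)
    have hfo : 0 ≤ L (y - xhat) := hloc.hasFDerivWithinAt_nonneg hdiff.hasFDerivWithinAt
      (sub_mem_posTangentConeAt_of_segment_subset ((feas_convex P z0).segment_subset hxhat hy))
    rw [map_sub, hLx y, hLx xhat, hyL, duality P c z0 xhat hxhat] at hfo
    have hz : ∑ t, ∑ s, ∑ a, xhat t s a * (Qval T P c t s a - Vv T P c t s) = 0 :=
      le_antisymm (by linarith) (Finset.sum_nonneg fun t _ => Finset.sum_nonneg fun s _ =>
        Finset.sum_nonneg fun a _ => hterm xhat hxhat t s a)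
    intro t s a hpos
    have h1 := (Finset.sum_eq_zero_iff_of_nonneg (fun t _ => Finset.sum_nonneg fun s _ =>
        Finset.sum_nonneg fun a _ => hterm xhat hxhat t s a)).1 hz t (Finset.mem_univ t)
    have h2 := (Finset.sum_eq_zero_iff_of_nonneg (fun s _ =>
        Finset.sum_nonneg fun a _ => hterm xhat hxhat t s a)).1 h1 s (Finset.mem_univ s)
    have h3 := (Finset.sum_eq_zero_iff_of_nonneg
      (fun a _ => hterm xhat hxhat t s a)).1 h2 a (Finset.mem_univ a)
    exact sub_eq_zero.1 ((mul_eq_zero.1 h3).resolve_left hpos.ne')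
  · intro hB x hx
    have hcv := convex_grad F U hUopen hUconv hC2 hhess xhat x (hXU hxhat) (hXU hx)
    rw [← hL, map_sub, hLx x, hLx xhat, duality P c z0 xhat hxhat, duality P c z0 x hx] at hcv
    have hz : ∑ t, ∑ s, ∑ a, xhat t s a * (Qval T P c t s a - Vv T P c t s) = 0 := by
      refine Finset.sum_eq_zero fun t _ => Finset.sum_eq_zero fun s _ =>
        Finset.sum_eq_zero fun a _ => ?_
      rcases (hxhat.1 t s a).eq_or_lt with h | h
      · rw [← h, zero_mul]
      · rw [hB t s a h, Vv, sub_self, mul_zero]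
    have hp : 0 ≤ ∑ t, ∑ s, ∑ a, x t s a * (Qval T P c t s a - Vv T P c t s) :=
      Finset.sum_nonneg fun t _ => Finset.sum_nonneg fun s _ =>
        Finset.sum_nonneg fun a _ => hterm x hx t s a
    linarith
end

section
/- Let D ⊆ ℝⁿ be a nonempty compact convex set and F : ℝⁿ → ℝ a differentiable convex function with finite curvature constant C_F := sup { (2/γ²)(F(w) − F(x) − ⟨∇F(x), w − x⟩) : x, s ∈ D, γ ∈ (0,1], w = x + γ(s − x) }, and let x̂ minimize F over D. Let (x^k) be Frank–Wolfe iterates: x⁰ ∈ D and x^{k+1} = (1 − γ_k) x^k + γ_k b^k where γ_k = 2/(k+2) and b^k ∈ argmin_{b ∈ D} ⟨∇F(x^k), b⟩. Then for every k ≥ 1, F(x^k) − F(x̂) ≤ 2 C_F/(k+2). -/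
open RealInnerProductSpace

/-- The set whose supremum defines the curvature constant C_F of F over D. -/
noncomputable def curvSet {n : ℕ} (D : Set (EuclideanSpace ℝ (Fin n)))
    (F : EuclideanSpace ℝ (Fin n) → ℝ) : Set ℝ :=
  {r | ∃ x ∈ D, ∃ s ∈ D, ∃ γ : ℝ, 0 < γ ∧ γ ≤ 1 ∧
    r = 2 / γ ^ 2 *
      (F (x + γ • (s - x)) - F x - ⟪gradient F x, γ • (s - x)⟫)}

theorem grad_ineq_aux {n : ℕ} (F : EuclideanSpace ℝ (Fin n) → ℝ)
    (hFdiff : Differentiable ℝ F) (hFconv : ConvexOn ℝ Set.univ F)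
    (x y : EuclideanSpace ℝ (Fin n)) :
    ⟪gradient F x, y - x⟫ ≤ F y - F x := by
  have hg : ConvexOn ℝ Set.univ (fun t : ℝ => F (AffineMap.lineMap x y t)) := by
    have := hFconv.comp_affineMap (AffineMap.lineMap x y : ℝ →ᵃ[ℝ] EuclideanSpace ℝ (Fin n))
    simpa [Function.comp_def] using this
  have hd : HasDerivAt (fun t : ℝ => F (AffineMap.lineMap x y t))
      ⟪gradient F x, y - x⟫ 0 := by
    have h1 : HasFDerivAt F (InnerProductSpace.toDual ℝ _ (gradient F x))
        (AffineMap.lineMap x y (0 : ℝ)) := by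
      rw [AffineMap.lineMap_apply_zero]
      exact (hFdiff x).hasGradientAt.hasFDerivAt
    have h2 : HasDerivAt (fun t : ℝ => (AffineMap.lineMap x y t : EuclideanSpace ℝ (Fin n)))
        (y - x) 0 := AffineMap.hasDerivAt_lineMap
    simpa [Function.comp_def] using h1.comp_hasDerivAt (0 : ℝ) h2
  have := hg.le_slope_of_hasDerivAt (Set.mem_univ 0) (Set.mem_univ 1) one_pos hd
  simpa [slope_def_field] using this

/-- For a differentiable convex F on a nonempty compact convex D with finite
curvature constant C_F and minimizer x̂ over D, the Frank–Wolfe iterates with step size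
γ_k = 2/(k+2) satisfy F(xᵏ) − F(x̂) ≤ 2 C_F/(k+2) for all k ≥ 1. -/
theorem stmt11 {n : ℕ} (D : Set (EuclideanSpace ℝ (Fin n)))
    (hDne : D.Nonempty) (hDcomp : IsCompact D) (hDconv : Convex ℝ D)
    (F : EuclideanSpace ℝ (Fin n) → ℝ)
    (hFdiff : Differentiable ℝ F) (hFconv : ConvexOn ℝ Set.univ F)
    (hbdd : BddAbove (curvSet D F))
    (xhat : EuclideanSpace ℝ (Fin n)) (hxhatD : xhat ∈ D)
    (hxhatmin : ∀ y ∈ D, F xhat ≤ F y)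
    (x b : ℕ → EuclideanSpace ℝ (Fin n)) (hx0 : x 0 ∈ D)
    (hbmem : ∀ k, b k ∈ D)
    (hbmin : ∀ k, ∀ c ∈ D, ⟪gradient F (x k), b k⟫ ≤ ⟪gradient F (x k), c⟫)
    (hiter : ∀ k : ℕ,
      x (k+1) = (1 - 2 / (k + 2 : ℝ)) • x k + (2 / (k + 2 : ℝ)) • b k) :
    ∀ k : ℕ, 1 ≤ k → F (x k) - F xhat ≤ 2 * sSup (curvSet D F) / (k + 2) := by
  have hγ : ∀ k : ℕ, (0 : ℝ) < 2 / (k + 2 : ℝ) ∧ 2 / (k + 2 : ℝ) ≤ 1 := by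
    intro k
    have hk : (0 : ℝ) ≤ k := Nat.cast_nonneg k
    refine ⟨by positivity, ?_⟩
    rw [div_le_one (by positivity)]
    linarith
  have hxD : ∀ k, x k ∈ D := by
    intro k
    induction k with
    | zero => exact hx0
    | succ k ih =>
      rw [hiter k]
      exact hDconv ih (hbmem k) (by linarith [(hγ k).2]) (hγ k).1.le (by ring)
  have hC : 0 ≤ sSup (curvSet D F) := by
    apply le_csSup hbdd
    exact ⟨xhat, hxhatD, xhat, hxhatD, 1, one_pos, le_rfl, by simp⟩
  set C := sSup (curvSet D F) with hCdef
  have step : ∀ k : ℕ, F (x (k+1)) - F xhat ≤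
      (1 - 2 / (k + 2 : ℝ)) * (F (x k) - F xhat) + (2 / (k + 2 : ℝ)) ^ 2 / 2 * C := by
    intro k
    obtain ⟨h0, h1⟩ := hγ k
    have hit := hiter k
    set g : ℝ := 2 / (k + 2 : ℝ) with hg
    have hmem : 2 / g ^ 2 * (F (x k + g • (b k - x k)) - F (x k)
        - ⟪gradient F (x k), g • (b k - x k)⟫) ≤ C :=
      le_csSup hbdd ⟨x k, hxD k, b k, hbmem k, g, h0, h1, rfl⟩
    have hx : x k + g • (b k - x k) = x (k+1) := by
      rw [hit]; module
    rw [hx, inner_smul_right, inner_sub_right] at hmem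
    have h2 := grad_ineq_aux F hFdiff hFconv (x k) xhat
    rw [inner_sub_right] at h2
    have h3 := hbmin k xhat hxhatD
    have h4 : g * (⟪gradient F (x k), b k⟫ - ⟪gradient F (x k), x k⟫)
        ≤ g * (F xhat - F (x k)) := by
      apply mul_le_mul_of_nonneg_left _ h0.le
      linarith
    have h5 := mul_le_mul_of_nonneg_left hmem (by positivity : 0 ≤ g ^ 2 / 2)
    rw [← mul_assoc, show g ^ 2 / 2 * (2 / g ^ 2) = 1 by field_simp, one_mul] at h5
    linarith
  intro k hk
  induction k, hk using Nat.le_induction with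
  | base =>
    have := step 0
    norm_num at this ⊢
    linarith
  | succ k hk ih =>
    have h := step k
    have h1 := mul_le_mul_of_nonneg_left ih (by linarith [(hγ k).2] : 0 ≤ 1 - 2 / (k + 2 : ℝ))
    have hk0 : (0 : ℝ) ≤ k := Nat.cast_nonneg k
    have h2 : (1 - 2 / (k + 2 : ℝ)) * (2 * C / (k + 2)) + (2 / (k + 2 : ℝ)) ^ 2 / 2 * C
        = 2 * C * ((k + 1) / (k + 2) ^ 2) := by
      field_simp
      ring
    have h3 : ((k : ℝ) + 1) / (k + 2) ^ 2 ≤ 1 / (k + 3) := by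
      rw [div_le_div_iff₀ (by positivity) (by positivity)]
      nlinarith
    have h4 := mul_le_mul_of_nonneg_left h3 (by positivity : 0 ≤ 2 * C)
    have h5 : 2 * C / (((k + 1 : ℕ) : ℝ) + 2) = 2 * C * (1 / (k + 3)) := by
      push_cast
      rw [mul_one_div]
      congr 1
      ring
    rw [h5]
    linarith
end
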